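/- arXiv:1705.04909 — 7 statements merged into one kernel-verified Lean document; each statement's English description precedes it below -/
import Mathlib

section
/- Under the assumptions of the shared context, if θ ∈ (0,1), then SINR(M) tends to θ/(1−θ) as M → ∞, and consequently R(M) tends to ((τ_c − 2τ_p)/τ_c)·log₂(1/(1−θ)); in particular this limit does not depend on α, p_S, p_R, s_LI, or the fading and estimate-variance parameters. -/
open Finset Real

/-- Large-`M` approximated per-user SINR (Proposition 1 of the paper).
Here `sSR i` denotes σ_SR(i)² and `sRD i` denotes σ_RD(i)². -/
noncomputable def SINR (K : ℕ) (k : Fin K) (pS pR sLI : ℝ)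
    (βSR βRD sSR sRD : Fin K → ℝ) (α θ : ℝ) (M : ℝ) : ℝ :=
  let A := pS * M * sSR k * sRD k
  let B := pS * (βSR k * sRD k + βRD k * sSR k)
  let C := pS * ∑ j ∈ Finset.univ.erase k,
      (sRD k * βSR j + βRD k * (sSR j) ^ 2 * sRD j / (sSR k * sRD k))
  let D := pR * sLI * sRD k
  let E := sRD k
  let F := ((1 - α) / α) * sRD k * (pS * (sSR k + ∑ i, βSR i) + pR * sLI + 1)
  let G := (pS / (pR * sSR k * sRD k)) * ∑ i, (sSR i) ^ 2 * sRD i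
  let H := ((1 - θ) / θ) * pS *
        (M * sSR k * sRD k + sSR k * βRD k * (∑ i, sRD i) / sRD k)
      + ((1 - θ) / θ) * pS * sRD k * ((∑ i, βSR i) + (pR * sLI + 1) / (α * pS))
      + ((1 - α) * (1 - θ) / (α * θ)) * sRD k * pS * (sSR k + ∑ i, βSR i)
      + ((1 - θ) / θ) * (pS / (pR * sSR k * sRD k)) * ∑ i, (sSR i) ^ 2 * sRD i
  A / (B + C + D + E + F + G + H)

/-!
The only part of the interference that grows with `M` comes from the destination quantization noise,
and it is exactly `(1 - θ) / θ` times the signal power. All other terms are asymptotically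
negligible, so the SINR tends to `θ / (1 - θ)` whatever the other parameters are, and the rate
follows by continuity of the logarithm at `1 + θ / (1 - θ) = 1 / (1 - θ)`.
-/

open Filter Topology

section AffineRatio

variable {𝕜 : Type*} [Field 𝕜] [LinearOrder 𝕜] [IsStrictOrderedRing 𝕜] [TopologicalSpace 𝕜]
  [OrderTopology 𝕜]

lemma tendsto_add_mul_div_add_mul_atTop (a b c : 𝕜) {d : 𝕜} (hd : d ≠ 0) :
    Tendsto (fun x : 𝕜 => (a + c * x) / (b + d * x)) atTop (𝓝 (c / d)) := by
  have tendsto_mul_inv_add (u v : 𝕜) : Tendsto (fun x : 𝕜 => u * x⁻¹ + v) atTop (𝓝 v) := by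
    simpa using (tendsto_inv_atTop_zero.const_mul u).add_const v
  refine ((tendsto_mul_inv_add a c).div (tendsto_mul_inv_add b d) hd).congr' ?_
  filter_upwards [eventually_ne_atTop 0] with x hx
  calc (a * x⁻¹ + c) / (b * x⁻¹ + d)
      = (a * x⁻¹ + c) * x / ((b * x⁻¹ + d) * x) := (mul_div_mul_right _ _ hx).symm
    _ = (a + c * x) / (b + d * x) := by simp only [add_mul, inv_mul_cancel_right₀ hx]

end AffineRatio

section SINR

variable {K : ℕ} (k : Fin K) (pS pR sLI : ℝ) (βSR βRD sSR sRD : Fin K → ℝ) (α θ : ℝ)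

/-- The part of the denominator of `SINR` that does not depend on the number of antennas. The
summands are named as in `SINR`; `H₀` is `H` at `M = 0`. -/
noncomputable def fixedInterference : ℝ :=
  let B := pS * (βSR k * sRD k + βRD k * sSR k)
  let C := pS * ∑ j ∈ Finset.univ.erase k,
      (sRD k * βSR j + βRD k * (sSR j) ^ 2 * sRD j / (sSR k * sRD k))
  let D := pR * sLI * sRD k
  let E := sRD k
  let F := ((1 - α) / α) * sRD k * (pS * (sSR k + ∑ i, βSR i) + pR * sLI + 1)
  let G := (pS / (pR * sSR k * sRD k)) * ∑ i, (sSR i) ^ 2 * sRD i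
  let H₀ := ((1 - θ) / θ) * pS * (sSR k * βRD k * (∑ i, sRD i) / sRD k)
      + ((1 - θ) / θ) * pS * sRD k * ((∑ i, βSR i) + (pR * sLI + 1) / (α * pS))
      + ((1 - α) * (1 - θ) / (α * θ)) * sRD k * pS * (sSR k + ∑ i, βSR i)
      + ((1 - θ) / θ) * (pS / (pR * sSR k * sRD k)) * ∑ i, (sSR i) ^ 2 * sRD i
  B + C + D + E + F + G + H₀

lemma SINR_eq_mul_div_add_mul (M : ℝ) :
    SINR K k pS pR sLI βSR βRD sSR sRD α θ M =
      (pS * sSR k * sRD k) * M /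
        (fixedInterference k pS pR sLI βSR βRD sSR sRD α θ +
          (1 - θ) / θ * (pS * sSR k * sRD k) * M) := by
  unfold SINR fixedInterference
  dsimp only
  congr 1 <;> ring

variable {k pS sSR sRD θ}

lemma tendsto_SINR_atTop (hpS : pS ≠ 0) (hsSR : sSR k ≠ 0) (hsRD : sRD k ≠ 0)
    (hθ0 : θ ≠ 0) (hθ1 : θ ≠ 1) :
    Tendsto (SINR K k pS pR sLI βSR βRD sSR sRD α θ) atTop (𝓝 (θ / (1 - θ))) := by
  have signal_slope_ne_zero : pS * sSR k * sRD k ≠ 0 := mul_ne_zero (mul_ne_zero hpS hsSR) hsRD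
  have noise_slope_ne_zero : (1 - θ) / θ * (pS * sSR k * sRD k) ≠ 0 :=
    mul_ne_zero (div_ne_zero (sub_ne_zero.mpr hθ1.symm) hθ0) signal_slope_ne_zero
  have slope_ratio :
      pS * sSR k * sRD k / ((1 - θ) / θ * (pS * sSR k * sRD k)) = θ / (1 - θ) := by
    rw [div_mul_cancel_right₀ signal_slope_ne_zero, inv_div]
  rw [funext (SINR_eq_mul_div_add_mul k pS pR sLI βSR βRD sSR sRD α θ), ← slope_ratio]
  simpa only [zero_add] using tendsto_add_mul_div_add_mul_atTop 0 _ _ noise_slope_ne_zero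

end SINR

lemma tendsto_logb_one_add_of_tendsto_div_one_sub {ι : Type*} {l : Filter ι} {f : ι → ℝ} {x : ℝ}
    (b : ℝ) (hx : x ≠ 1) (hf : Tendsto f l (𝓝 (x / (1 - x)))) :
    Tendsto (fun i => logb b (1 + f i)) l (𝓝 (logb b (1 / (1 - x)))) := by
  have one_sub_ne_zero : 1 - x ≠ 0 := sub_ne_zero.mpr hx.symm
  have one_add_limit : 1 + x / (1 - x) = 1 / (1 - x) := by
    rw [one_add_div one_sub_ne_zero, sub_add_cancel]
  exact (one_add_limit ▸ hf.const_add 1).logb (one_div_ne_zero one_sub_ne_zero)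

/-- Corollary 1: as `M → ∞` the approximated SINR converges to `θ/(1−θ)` and
the approximated rate converges to `((τc − 2τp)/τc)·log₂(1/(1−θ))`; the limit
depends only on the destination ADC resolution `θ`. -/
theorem sinr_rate_limit_large_antennas (K : ℕ) (hK : 1 ≤ K) (k : Fin K)
    (pS pR sLI : ℝ) (βSR βRD sSR sRD : Fin K → ℝ) (α θ τc τp : ℝ)
    (hpS : 0 < pS) (hpR : 0 < pR) (hsLI : 0 < sLI)
    (hβSR : ∀ i, 0 < βSR i) (hβRD : ∀ i, 0 < βRD i)
    (hsSR : ∀ i, 0 < sSR i) (hsRD : ∀ i, 0 < sRD i)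
    (hα0 : 0 < α) (hα1 : α ≤ 1) (hθ0 : 0 < θ) (hθ1 : θ < 1)
    (hτp : 0 < τp) (hτc : 2 * τp < τc) :
    Filter.Tendsto (fun M => SINR K k pS pR sLI βSR βRD sSR sRD α θ M)
      Filter.atTop (nhds (θ / (1 - θ))) ∧
    Filter.Tendsto (fun M => (τc - 2 * τp) / τc *
        Real.logb 2 (1 + SINR K k pS pR sLI βSR βRD sSR sRD α θ M))
      Filter.atTop (nhds ((τc - 2 * τp) / τc * Real.logb 2 (1 / (1 - θ)))) := by
  have sinr_limit := tendsto_SINR_atTop pR sLI βSR βRD α hpS.ne' (hsSR k).ne' (hsRD k).ne'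
    hθ0.ne' hθ1.ne
  exact ⟨sinr_limit,
    (tendsto_logb_one_add_of_tendsto_div_one_sub 2 hθ1.ne sinr_limit).const_mul _⟩
end

section
/- Under the assumptions of the shared context, if θ ∈ (0,1), then SINR(M) < θ/(1−θ) for every M > 0; i.e., the asymptotic rate limit cannot be exceeded by any finite number of relay antennas. -/
/-!
Quantization at the destination distorts the useful signal itself: besides terms that do not grow
with `M`, the denominator contains the multiple `((1 - θ) / θ) * A` of the numerator `A`. Since
`A / (n + t * A) < 1 / t` for `n, t > 0`, the SINR stays below `θ / (1 - θ)`. The inequality is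
strict because the thermal noise forwarded by the relay never vanishes.
-/

open Finset Real

theorem div_add_mul_self_lt_inv {F : Type*} [Field F] [LinearOrder F] [IsStrictOrderedRing F]
    {a n t : F} (ha : 0 ≤ a) (hn : 0 < n) (ht : 0 < t) : a / (n + t * a) < t⁻¹ := by
  rw [div_lt_iff₀ (by positivity), mul_add, inv_mul_cancel_left₀ ht.ne']
  exact lt_add_of_pos_left a (by positivity)

namespace SINR

/-- Numerator of the SINR (the paper's `A`): the useful signal power received by user `k`. The
common factor of all the powers below is normalized so that the noise forwarded by the relay has
power `sRD k`. -/
noncomputable def signalPower {ι : Type*} (k : ι) (pS : ℝ) (sSR sRD : ι → ℝ) (M : ℝ) : ℝ :=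
  pS * M * sSR k * sRD k

section Terms

variable {ι : Type*} [Fintype ι] (k : ι) (pS pR sLI : ℝ) (βSR βRD sSR sRD : ι → ℝ) (α : ℝ)

/-- Interference from the other user pairs (the paper's `C`). -/
noncomputable def interPairInterference [DecidableEq ι] : ℝ :=
  pS * ∑ j ∈ Finset.univ.erase k,
    (sRD k * βSR j + βRD k * (sSR j) ^ 2 * sRD j / (sSR k * sRD k))

/-- Quantization distortion of the relay's ADCs, of parameter `α` (the paper's `F`). -/
noncomputable def relayDistortion : ℝ :=
  ((1 - α) / α) * sRD k * (pS * (sSR k + ∑ i, βSR i) + pR * sLI + 1)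

/-- The paper's `G`: the thermal noise at the destination, divided by the power gain of the
relay. -/
noncomputable def destinationNoise : ℝ :=
  (pS / (pR * sSR k * sRD k)) * ∑ i, (sSR i) ^ 2 * sRD i

/-- The part `B + C + D + E + F + G` of the denominator that does not involve the ADC parameter
`θ`: uncertainty of the gain of user `k`, inter-pair interference, loop interference, noise
forwarded by the relay, distortion at the relay and noise at the destination, in this order. -/
noncomputable def interferenceAndNoise [DecidableEq ι] : ℝ :=
  pS * (βSR k * sRD k + βRD k * sSR k) + interPairInterference k pS βSR βRD sSR sRD
    + pR * sLI * sRD k + sRD k + relayDistortion k pS pR sLI βSR sSR sRD α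
    + destinationNoise k pS pR sSR sRD

/-- The power, other than that of the useful signal, that reaches the destination's ADC, of
parameter `θ`. The paper's `H` is `(1 - θ) / θ` times the sum of this and `signalPower`. -/
noncomputable def residualDestinationInput : ℝ :=
  pS * (sSR k * βRD k * (∑ i, sRD i) / sRD k)
    + pS * sRD k * ((∑ i, βSR i) + (pR * sLI + 1) / (α * pS))
    + ((1 - α) / α) * sRD k * pS * (sSR k + ∑ i, βSR i)
    + destinationNoise k pS pR sSR sRD

end Terms

theorem eq_signalPower_div {K : ℕ} (k : Fin K) (pS pR sLI : ℝ) (βSR βRD sSR sRD : Fin K → ℝ)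
    (α θ M : ℝ) :
    SINR K k pS pR sLI βSR βRD sSR sRD α θ M =
      signalPower k pS sSR sRD M /
        (interferenceAndNoise k pS pR sLI βSR βRD sSR sRD α
            + (1 - θ) / θ * residualDestinationInput k pS pR sLI βSR βRD sSR sRD α
          + (1 - θ) / θ * signalPower k pS sSR sRD M) := by
  simp only [SINR, signalPower, interferenceAndNoise, interPairInterference, relayDistortion,
    residualDestinationInput, destinationNoise]
  congr 1
  ring

theorem signalPower_nonneg {ι : Type*} {k : ι} {pS : ℝ} {sSR sRD : ι → ℝ} {M : ℝ} (hpS : 0 ≤ pS)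
    (hM : 0 ≤ M) (hsSR : 0 ≤ sSR k) (hsRD : 0 ≤ sRD k) : 0 ≤ signalPower k pS sSR sRD M := by
  unfold signalPower
  positivity

section Sign

variable {ι : Type*} [Fintype ι] {k : ι} {pS pR sLI : ℝ} {βSR βRD sSR sRD : ι → ℝ} {α : ℝ}

theorem interPairInterference_nonneg [DecidableEq ι] (hpS : 0 ≤ pS) (hβSR : ∀ i, 0 ≤ βSR i)
    (hβRD : 0 ≤ βRD k) (hsSR : 0 ≤ sSR k) (hsRD : ∀ i, 0 ≤ sRD i) :
    0 ≤ interPairInterference k pS βSR βRD sSR sRD := by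
  refine mul_nonneg hpS (Finset.sum_nonneg fun j _ => ?_)
  have hβSRj := hβSR j
  have hsRDj := hsRD j
  have hsRDk := hsRD k
  positivity

theorem relayDistortion_nonneg (hpS : 0 ≤ pS) (hpR : 0 ≤ pR) (hsLI : 0 ≤ sLI)
    (hβSR : ∀ i, 0 ≤ βSR i) (hsSR : 0 ≤ sSR k) (hsRD : 0 ≤ sRD k) (hα0 : 0 ≤ α) (hα1 : α ≤ 1) :
    0 ≤ relayDistortion k pS pR sLI βSR sSR sRD α := by
  have hβSR_sum : 0 ≤ ∑ i, βSR i := Finset.sum_nonneg fun i _ => hβSR i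
  unfold relayDistortion
  positivity

theorem destinationNoise_nonneg (hpS : 0 ≤ pS) (hpR : 0 ≤ pR) (hsSR : 0 ≤ sSR k)
    (hsRD : ∀ i, 0 ≤ sRD i) : 0 ≤ destinationNoise k pS pR sSR sRD := by
  have hsRDk := hsRD k
  exact mul_nonneg (by positivity)
    (Finset.sum_nonneg fun i _ => mul_nonneg (sq_nonneg (sSR i)) (hsRD i))

theorem interferenceAndNoise_pos [DecidableEq ι] (hpS : 0 ≤ pS) (hpR : 0 ≤ pR) (hsLI : 0 ≤ sLI)
    (hβSR : ∀ i, 0 ≤ βSR i) (hβRD : 0 ≤ βRD k) (hsSR : 0 ≤ sSR k) (hsRD : ∀ i, 0 ≤ sRD i)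
    (hsRDk : 0 < sRD k) (hα0 : 0 ≤ α) (hα1 : α ≤ 1) :
    0 < interferenceAndNoise k pS pR sLI βSR βRD sSR sRD α := by
  have hβSRk := hβSR k
  have hC := interPairInterference_nonneg hpS hβSR hβRD hsSR hsRD
  have hF := relayDistortion_nonneg hpS hpR hsLI hβSR hsSR hsRDk.le hα0 hα1
  have hG := destinationNoise_nonneg hpS hpR hsSR hsRD
  unfold interferenceAndNoise
  positivity

theorem residualDestinationInput_nonneg (hpS : 0 ≤ pS) (hpR : 0 ≤ pR) (hsLI : 0 ≤ sLI)
    (hβSR : ∀ i, 0 ≤ βSR i) (hβRD : 0 ≤ βRD k) (hsSR : 0 ≤ sSR k) (hsRD : ∀ i, 0 ≤ sRD i)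
    (hα0 : 0 ≤ α) (hα1 : α ≤ 1) :
    0 ≤ residualDestinationInput k pS pR sLI βSR βRD sSR sRD α := by
  have hsRDk := hsRD k
  have hβSR_sum : 0 ≤ ∑ i, βSR i := Finset.sum_nonneg fun i _ => hβSR i
  have hsRD_sum : 0 ≤ ∑ i, sRD i := Finset.sum_nonneg fun i _ => hsRD i
  have hG := destinationNoise_nonneg hpS hpR hsSR hsRD
  unfold residualDestinationInput
  positivity

end Sign

end SINR

/-- The approximated SINR is strictly below the asymptotic limit `θ/(1−θ)`
for every finite number of relay antennas `M > 0`. -/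
theorem sinr_lt_limit (K : ℕ) (hK : 1 ≤ K) (k : Fin K)
    (pS pR sLI : ℝ) (βSR βRD sSR sRD : Fin K → ℝ) (α θ : ℝ)
    (hpS : 0 < pS) (hpR : 0 < pR) (hsLI : 0 < sLI)
    (hβSR : ∀ i, 0 < βSR i) (hβRD : ∀ i, 0 < βRD i)
    (hsSR : ∀ i, 0 < sSR i) (hsRD : ∀ i, 0 < sRD i)
    (hα0 : 0 < α) (hα1 : α ≤ 1) (hθ0 : 0 < θ) (hθ1 : θ < 1) :
    ∀ M : ℝ, 0 < M →
      SINR K k pS pR sLI βSR βRD sSR sRD α θ M < θ / (1 - θ) := by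
  intro M hM
  have hβSR' : ∀ i, 0 ≤ βSR i := fun i => (hβSR i).le
  have hsRD' : ∀ i, 0 ≤ sRD i := fun i => (hsRD i).le
  have hβRDk : 0 ≤ βRD k := (hβRD k).le
  have hsSRk : 0 ≤ sSR k := (hsSR k).le
  have ht : 0 < (1 - θ) / θ := div_pos (sub_pos.mpr hθ1) hθ0
  have hS : 0 ≤ SINR.signalPower k pS sSR sRD M :=
    SINR.signalPower_nonneg hpS.le hM.le hsSRk (hsRD' k)
  have hN : 0 < SINR.interferenceAndNoise k pS pR sLI βSR βRD sSR sRD α :=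
    SINR.interferenceAndNoise_pos hpS.le hpR.le hsLI.le hβSR' hβRDk hsSRk hsRD' (hsRD k)
      hα0.le hα1
  have hR : 0 ≤ SINR.residualDestinationInput k pS pR sLI βSR βRD sSR sRD α :=
    SINR.residualDestinationInput_nonneg hpS.le hpR.le hsLI.le hβSR' hβRDk hsSRk hsRD' hα0.le hα1
  rw [SINR.eq_signalPower_div, ← inv_div (1 - θ) θ]
  exact div_add_mul_self_lt_inv hS (add_pos_of_pos_of_nonneg hN (mul_nonneg ht.le hR)) ht
end

section
/- Fix constants E_S > 0 and E_R > 0 and, in the shared context, replace p_S by E_S/M and p_R by E_R/M (keeping the estimate variances σ_SR(i)², σ_RD(i)², the fading coefficients, s_LI, α and θ fixed, independent of M). Then as M → ∞, SINR(M) converges to θ / (1 − θ + 1/(α·E_S·σ_SR(k)²) + (Σ_{i=1}^K σ_SR(i)⁴·σ_RD(i)²)/(E_R·σ_SR(k)⁴·σ_RD(k)⁴)). -/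
/-!
The denominator of the SINR splits as `S / θ * N + I`, where `S = p_S M σ_SR(k)² σ_RD(k)²` is the
signal power. Here `N` depends on the powers only through the products `p_S M` and `p_R M`, which
the scaling keeps fixed, while `I` is linear in the bare powers `p_S` and `p_R`, which tend to `0`.
Hence the SINR tends to `S / (S / θ * N) = θ / N`.
-/

open Finset Real

open Filter Topology

namespace SINR

section Noise

variable {ι : Type*} [Fintype ι]

/-- The noise that the array gain does not remove, in units of the signal power divided by `θ`:
quantization noise, thermal noise at the relay, and destination noise weighted by the power
normalization of the relay. `PS` and `PR` stand for the array-scaled powers `p_S M` and `p_R M`;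
`sSR i` and `sRD i` are variances, as in `SINR`. -/
noncomputable def residualNoise (k : ι) (PS PR : ℝ) (sSR sRD : ι → ℝ) (α θ : ℝ) : ℝ :=
  1 - θ + 1 / (α * PS * sSR k) + (∑ i, sSR i ^ 2 * sRD i) / (PR * sSR k ^ 2 * sRD k ^ 2)

/-- The part of the SINR denominator that is linear in the powers `pS` and `pR` and does not grow
with the number of antennas: estimation error, inter-pair interference and loop interference,
together with the quantization noise they cause. -/
noncomputable def interference [DecidableEq ι] (k : ι) (pS pR sLI : ℝ)
    (βSR βRD sSR sRD : ι → ℝ) (α θ : ℝ) : ℝ :=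
  pS * (βSR k * sRD k + βRD k * sSR k
    + ∑ j ∈ univ.erase k, (sRD k * βSR j + βRD k * sSR j ^ 2 * sRD j / (sSR k * sRD k))
    + (1 - α) / (α * θ) * sRD k * (sSR k + ∑ i, βSR i)
    + (1 - θ) / θ * (sSR k * βRD k * (∑ i, sRD i) / sRD k + sRD k * ∑ i, βSR i))
  + pR * (sLI * sRD k / (α * θ))

theorem residualNoise_pos {k : ι} {PS PR : ℝ} {sSR sRD : ι → ℝ} {α θ : ℝ}
    (hPS : 0 < PS) (hPR : 0 ≤ PR) (hsSR : 0 < sSR k) (hsRD : ∀ i, 0 ≤ sRD i)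
    (hα : 0 < α) (hθ : θ ≤ 1) : 0 < residualNoise k PS PR sSR sRD α θ := by
  have hsum : 0 ≤ ∑ i, sSR i ^ 2 * sRD i :=
    sum_nonneg fun i _ => mul_nonneg (sq_nonneg _) (hsRD i)
  exact add_pos_of_pos_of_nonneg
    (add_pos_of_nonneg_of_pos (sub_nonneg.2 hθ) (by positivity))
    (div_nonneg hsum (by positivity))

theorem tendsto_residualNoise {τ : Type*} {l : Filter τ} {PS PR : τ → ℝ} {k : ι}
    {ES ER : ℝ} {sSR sRD : ι → ℝ} {α : ℝ} (θ : ℝ)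
    (hPS : Tendsto PS l (𝓝 ES)) (hPR : Tendsto PR l (𝓝 ER)) (hES : ES ≠ 0) (hER : ER ≠ 0)
    (hsSR : sSR k ≠ 0) (hsRD : sRD k ≠ 0) (hα : α ≠ 0) :
    Tendsto (fun t => residualNoise k (PS t) (PR t) sSR sRD α θ) l
      (𝓝 (residualNoise k ES ER sSR sRD α θ)) := by
  have hthermal := tendsto_const_nhds (x := (1 : ℝ)).div
    ((hPS.const_mul α).mul_const (sSR k)) (by positivity)
  have hamplified := tendsto_const_nhds (x := ∑ i, sSR i ^ 2 * sRD i).div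
    ((hPR.mul_const (sSR k ^ 2)).mul_const (sRD k ^ 2)) (by positivity)
  exact (hthermal.const_add (1 - θ)).add hamplified

theorem tendsto_interference_zero [DecidableEq ι] {τ : Type*} {l : Filter τ} {pS pR : τ → ℝ}
    (k : ι) (sLI : ℝ) (βSR βRD sSR sRD : ι → ℝ) (α θ : ℝ)
    (hpS : Tendsto pS l (𝓝 0)) (hpR : Tendsto pR l (𝓝 0)) :
    Tendsto (fun t => interference k (pS t) (pR t) sLI βSR βRD sSR sRD α θ) l (𝓝 0) := by
  simpa only [interference, zero_mul, add_zero] using (hpS.mul_const _).add (hpR.mul_const _)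

end Noise

theorem eq_signal_div_residualNoise_add_interference {K : ℕ} {k : Fin K} {pS : ℝ} (pR sLI : ℝ)
    (βSR βRD : Fin K → ℝ) {sSR sRD : Fin K → ℝ} {α θ M : ℝ}
    (hpS : pS ≠ 0) (hM : M ≠ 0) (hsSR : sSR k ≠ 0) (hsRD : sRD k ≠ 0)
    (hα : α ≠ 0) (hθ : θ ≠ 0) :
    SINR K k pS pR sLI βSR βRD sSR sRD α θ M =
      pS * M * sSR k * sRD k /
        (pS * M * sSR k * sRD k / θ * residualNoise k (pS * M) (pR * M) sSR sRD α θ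
          + interference k pS pR sLI βSR βRD sSR sRD α θ) := by
  unfold SINR residualNoise interference
  dsimp only
  congr 1
  -- Quantization repeats noise terms with weights `(1 - α) / α` and `(1 - θ) / θ`; the copies merge
  -- through `1 + (1 - α) / α = 1 / α` and `1 + (1 - θ) / θ = 1 / θ`.
  field_simp
  ring

end SINR

section PowerScaling

variable {𝕜 : Type*} [Field 𝕜] [LinearOrder 𝕜] [IsStrictOrderedRing 𝕜] [TopologicalSpace 𝕜]

theorem tendsto_zero_of_tendsto_mul_atTop [OrderTopology 𝕜] {τ : Type*} {l : Filter τ}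
    {p M : τ → 𝕜} {c : 𝕜}
    (hM : Tendsto M l atTop) (hpM : Tendsto (fun t => p t * M t) l (𝓝 c)) :
    Tendsto p l (𝓝 0) :=
  (hpM.div_atTop hM).congr' <|
    (hM.eventually_ne_atTop 0).mono fun _ ht => mul_div_cancel_right₀ _ ht

theorem tendsto_div_mul_self_atTop (c : 𝕜) :
    Tendsto (fun M : 𝕜 => c / M * M) atTop (𝓝 c) :=
  tendsto_const_nhds.congr' <|
    (eventually_ne_atTop 0).mono fun _ hM => (div_mul_cancel₀ c hM).symm

end PowerScaling

theorem sinr_power_scaling_law_general {τ : Type*} {l : Filter τ} {K : ℕ} {k : Fin K}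
    {pS pR M : τ → ℝ} {ES ER : ℝ} (sLI : ℝ) (βSR βRD : Fin K → ℝ) {sSR sRD : Fin K → ℝ} {α θ : ℝ}
    (hM : Tendsto M l atTop)
    (hpS : Tendsto (fun t => pS t * M t) l (𝓝 ES)) (hpR : Tendsto (fun t => pR t * M t) l (𝓝 ER))
    (hES : ES ≠ 0) (hER : ER ≠ 0) (hsSR : sSR k ≠ 0) (hsRD : sRD k ≠ 0) (hα : α ≠ 0) (hθ : θ ≠ 0)
    (hnoise : SINR.residualNoise k ES ER sSR sRD α θ ≠ 0) :
    Tendsto (fun t => SINR K k (pS t) (pR t) sLI βSR βRD sSR sRD α θ (M t)) l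
      (𝓝 (θ / SINR.residualNoise k ES ER sSR sRD α θ)) := by
  set signal := ES * sSR k * sRD k
  set noise := SINR.residualNoise k ES ER sSR sRD α θ
  have hsignal : Tendsto (fun t => pS t * M t * sSR k * sRD k) l (𝓝 signal) :=
    (hpS.mul_const _).mul_const _
  have hresidual := SINR.tendsto_residualNoise θ hpS hpR hES hER hsSR hsRD hα
  have hinterference := SINR.tendsto_interference_zero k sLI βSR βRD sSR sRD α θ
    (tendsto_zero_of_tendsto_mul_atTop hM hpS) (tendsto_zero_of_tendsto_mul_atTop hM hpR)
  have hsignal_ne : signal ≠ 0 := by positivity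
  have hlimit : signal / (signal / θ * noise + 0) = θ / noise := by
    rw [add_zero, div_mul_eq_mul_div, div_div_eq_mul_div, mul_div_mul_left _ _ hsignal_ne]
  rw [← hlimit]
  refine (hsignal.div (((hsignal.div_const θ).mul hresidual).add hinterference)
    (by rw [add_zero]; positivity)).congr' ?_
  filter_upwards [hpS.eventually_ne hES] with t hpSM
  exact (SINR.eq_signal_div_residualNoise_add_interference _ _ _ _ (left_ne_zero_of_mul hpSM)
    (right_ne_zero_of_mul hpSM) hsSR hsRD hα hθ).symm

/-- Corollary 2 (power scaling law): with `p_S = E_S/M` and `p_R = E_R/M`,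
as `M → ∞` the approximated SINR converges to
`θ / (1 − θ + 1/(α·E_S·σ_SR(k)²) + (Σᵢ σ_SR(i)⁴ σ_RD(i)²)/(E_R·σ_SR(k)⁴·σ_RD(k)⁴))`. -/
theorem sinr_power_scaling_law (K : ℕ) (hK : 1 ≤ K) (k : Fin K)
    (ES ER sLI : ℝ) (βSR βRD sSR sRD : Fin K → ℝ) (α θ : ℝ)
    (hES : 0 < ES) (hER : 0 < ER) (hsLI : 0 < sLI)
    (hβSR : ∀ i, 0 < βSR i) (hβRD : ∀ i, 0 < βRD i)
    (hsSR : ∀ i, 0 < sSR i) (hsRD : ∀ i, 0 < sRD i)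
    (hα0 : 0 < α) (hα1 : α ≤ 1) (hθ0 : 0 < θ) (hθ1 : θ ≤ 1) :
    Filter.Tendsto
      (fun M => SINR K k (ES / M) (ER / M) sLI βSR βRD sSR sRD α θ M)
      Filter.atTop
      (nhds (θ / (1 - θ + 1 / (α * ES * sSR k)
        + (∑ i, (sSR i) ^ 2 * sRD i) / (ER * (sSR k) ^ 2 * (sRD k) ^ 2)))) := by
  exact sinr_power_scaling_law_general sLI βSR βRD tendsto_id (tendsto_div_mul_self_atTop ES)
    (tendsto_div_mul_self_atTop ER) hES.ne' hER.ne' (hsSR k).ne' (hsRD k).ne' hα0.ne' hθ0.ne'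
    (SINR.residualNoise_pos hES hER.le (hsSR k) (fun i => (hsRD i).le) hα0 hθ1).ne'
end

section
/- In the shared context, fix a quantization parameter q ∈ (0,1) and M ≥ 1, and hold all parameters (in particular the channel-estimate variances σ_SR(i)², σ_RD(i)²) the same in both of the following configurations. Let SINR^R(M) denote SINR(M) evaluated at (α, θ) = (q, 1) (low-resolution ADCs at the relay, perfect ADCs at the destination) and SINR^D(M) denote SINR(M) evaluated at (α, θ) = (1, q) (perfect ADCs at the relay, low-resolution ADCs at the destination). Then SINR^R(M) > SINR^D(M); moreover the two quantities are equal when q = 1. -/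
/-!
Quantizing with parameter `q` adds to the SINR denominator the power at the ADC input scaled by
`t = (1 - q) / q`. The power at a destination contains everything that reaches the relay except the
extra estimate term `sSR k`, which the array gain `M ≥ 1` of the desired signal outweighs; on top of
that it contains the destination noise. Hence the destination ADC introduces more distortion.
-/

open Finset Real

section PowerBudget

variable {ι : Type*} [Fintype ι]

/-- The additive noise of destination `k`, referred back through the relay's amplification factor
(the term `G` of `SINR`). -/
noncomputable def destNoise (k : ι) (pS pR : ℝ) (sSR sRD : ι → ℝ) : ℝ :=
  pS / (pR * sSR k * sRD k) * ∑ i, sSR i ^ 2 * sRD i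

/-- The interference and noise seen by user `k` with perfect ADCs everywhere
(the terms `B`, `C`, `D`, `E`, `G` of `SINR`). -/
noncomputable def unquantizedNoise [DecidableEq ι] (k : ι) (pS pR sLI : ℝ)
    (βSR βRD sSR sRD : ι → ℝ) : ℝ :=
  pS * (βSR k * sRD k + βRD k * sSR k)
    + pS * ∑ j ∈ univ.erase k, (sRD k * βSR j + βRD k * sSR j ^ 2 * sRD j / (sSR k * sRD k))
    + pR * sLI * sRD k + sRD k + destNoise k pS pR sSR sRD

/-- The power entering the relay ADCs, weighted by the gain `sRD k` with which its distortion
reaches user `k`; the term `F` of `SINR` is `(1 - α) / α` times this power. -/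
noncomputable def relayInputPower (k : ι) (pS pR sLI : ℝ) (βSR sSR sRD : ι → ℝ) : ℝ :=
  sRD k * (pS * (sSR k + ∑ i, βSR i) + pR * sLI + 1)

/-- The power entering the ADC of destination `k` when the relay ADCs are perfect, in the same
normalization as `destNoise`; the term `H` of `SINR` at `α = 1` is `(1 - θ) / θ` times this
power. -/
noncomputable def destInputPower (k : ι) (pS pR sLI : ℝ) (βSR βRD sSR sRD : ι → ℝ) (M : ℝ) : ℝ :=
  pS * (M * sSR k * sRD k + sSR k * βRD k * (∑ i, sRD i) / sRD k)
    + sRD k * (pS * ∑ i, βSR i + pR * sLI + 1) + destNoise k pS pR sSR sRD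

variable {k : ι} {pS pR sLI M : ℝ} {βSR βRD sSR sRD : ι → ℝ}

lemma destNoise_nonneg (hpS : 0 ≤ pS) (hpR : 0 ≤ pR) (hsSR : 0 ≤ sSR k)
    (hsRD : ∀ i, 0 ≤ sRD i) : 0 ≤ destNoise k pS pR sSR sRD := by
  have hsum : 0 ≤ ∑ i, sSR i ^ 2 * sRD i :=
    sum_nonneg fun i _ => mul_nonneg (sq_nonneg _) (hsRD i)
  have hk := hsRD k
  unfold destNoise
  positivity

lemma destNoise_pos (hpS : 0 < pS) (hpR : 0 < pR) (hsSR : 0 < sSR k) (hsRD : ∀ i, 0 ≤ sRD i)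
    (hsRDk : 0 < sRD k) : 0 < destNoise k pS pR sSR sRD := by
  have hsum : 0 < ∑ i, sSR i ^ 2 * sRD i :=
    sum_pos' (fun i _ => mul_nonneg (sq_nonneg _) (hsRD i)) ⟨k, mem_univ k, by positivity⟩
  unfold destNoise
  positivity

lemma unquantizedNoise_nonneg [DecidableEq ι] (hpS : 0 ≤ pS) (hpR : 0 ≤ pR) (hsLI : 0 ≤ sLI)
    (hβSR : ∀ i, 0 ≤ βSR i) (hβRD : 0 ≤ βRD k) (hsSR : 0 ≤ sSR k) (hsRD : ∀ i, 0 ≤ sRD i) :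
    0 ≤ unquantizedNoise k pS pR sLI βSR βRD sSR sRD := by
  have hβSRk := hβSR k
  have hsRDk := hsRD k
  have hsum : 0 ≤ ∑ j ∈ univ.erase k,
      (sRD k * βSR j + βRD k * sSR j ^ 2 * sRD j / (sSR k * sRD k)) :=
    sum_nonneg fun j _ => by
      have hβSRj := hβSR j
      have hsRDj := hsRD j
      positivity
  have hnoise := destNoise_nonneg hpS hpR hsSR hsRD
  unfold unquantizedNoise
  positivity

lemma relayInputPower_pos (hpS : 0 ≤ pS) (hpR : 0 ≤ pR) (hsLI : 0 ≤ sLI)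
    (hβSR : ∀ i, 0 ≤ βSR i) (hsSR : 0 ≤ sSR k) (hsRD : 0 < sRD k) :
    0 < relayInputPower k pS pR sLI βSR sSR sRD := by
  have hsum : 0 ≤ ∑ i, βSR i := sum_nonneg fun i _ => hβSR i
  unfold relayInputPower
  positivity

lemma destInputPower_sub_relayInputPower :
    destInputPower k pS pR sLI βSR βRD sSR sRD M - relayInputPower k pS pR sLI βSR sSR sRD =
      pS * (M - 1) * sSR k * sRD k + pS * (sSR k * βRD k * (∑ i, sRD i) / sRD k)
        + destNoise k pS pR sSR sRD := by
  unfold destInputPower relayInputPower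
  ring

lemma relayInputPower_lt_destInputPower (hpS : 0 < pS) (hpR : 0 < pR) (hβRD : 0 ≤ βRD k)
    (hsSR : 0 < sSR k) (hsRD : ∀ i, 0 ≤ sRD i) (hsRDk : 0 < sRD k) (hM : 1 ≤ M) :
    relayInputPower k pS pR sLI βSR sSR sRD <
      destInputPower k pS pR sLI βSR βRD sSR sRD M := by
  have hsum : 0 ≤ ∑ i, sRD i := sum_nonneg fun i _ => hsRD i
  have : 0 ≤ M - 1 := sub_nonneg.mpr hM
  have hnoise := destNoise_pos hpS hpR hsSR hsRD hsRDk
  rw [← sub_pos, destInputPower_sub_relayInputPower]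
  positivity

end PowerBudget

section SINR

variable {K : ℕ} {k : Fin K} {pS pR sLI q M : ℝ} {βSR βRD sSR sRD : Fin K → ℝ}

lemma SINR_lowres_relay :
    SINR K k pS pR sLI βSR βRD sSR sRD q 1 M =
      pS * M * sSR k * sRD k / (unquantizedNoise k pS pR sLI βSR βRD sSR sRD
        + (1 - q) / q * relayInputPower k pS pR sLI βSR sSR sRD) := by
  unfold SINR unquantizedNoise relayInputPower destNoise
  ring

lemma SINR_lowres_dest (hpS : pS ≠ 0) :
    SINR K k pS pR sLI βSR βRD sSR sRD 1 q M =
      pS * M * sSR k * sRD k / (unquantizedNoise k pS pR sLI βSR βRD sSR sRD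
        + (1 - q) / q * destInputPower k pS pR sLI βSR βRD sSR sRD M) := by
  have hcancel : pS * ((∑ i, βSR i) + (pR * sLI + 1) / (1 * pS)) =
      pS * ∑ i, βSR i + pR * sLI + 1 := by
    field_simp
    ring
  unfold SINR unquantizedNoise destInputPower destNoise
  dsimp only
  congr 1
  linear_combination (1 - q) / q * sRD k * hcancel

end SINR

/-- Corollary 4: with the same quantization level `q ∈ (0,1)`, deploying the
low-resolution ADCs at the relay (`α = q, θ = 1`) yields a strictly larger
SINR than deploying them at the destinations (`α = 1, θ = q`); the two
configurations coincide at `q = 1`. -/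
theorem lowres_adc_better_at_relay (K : ℕ) (hK : 1 ≤ K) (k : Fin K)
    (pS pR sLI : ℝ) (βSR βRD sSR sRD : Fin K → ℝ) (q M : ℝ)
    (hpS : 0 < pS) (hpR : 0 < pR) (hsLI : 0 < sLI)
    (hβSR : ∀ i, 0 < βSR i) (hβRD : ∀ i, 0 < βRD i)
    (hsSR : ∀ i, 0 < sSR i) (hsRD : ∀ i, 0 < sRD i)
    (hq0 : 0 < q) (hq1 : q < 1) (hM : 1 ≤ M) :
    SINR K k pS pR sLI βSR βRD sSR sRD q 1 M >
      SINR K k pS pR sLI βSR βRD sSR sRD 1 q M ∧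
    ∀ q' : ℝ, q' = 1 →
      SINR K k pS pR sLI βSR βRD sSR sRD q' 1 M =
        SINR K k pS pR sLI βSR βRD sSR sRD 1 q' M := by
  refine ⟨?_, fun q' hq' => by rw [hq']⟩
  have hβSR₀ i := (hβSR i).le
  have hsRD₀ i := (hsRD i).le
  have ht : 0 < (1 - q) / q := div_pos (sub_pos.mpr hq1) hq0
  have hsignal : 0 < pS * M * sSR k * sRD k :=
    mul_pos (mul_pos (mul_pos hpS (one_pos.trans_le hM)) (hsSR k)) (hsRD k)
  have hnoise : 0 ≤ unquantizedNoise k pS pR sLI βSR βRD sSR sRD :=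
    unquantizedNoise_nonneg hpS.le hpR.le hsLI.le hβSR₀ (hβRD k).le (hsSR k).le hsRD₀
  have hrelay : 0 < relayInputPower k pS pR sLI βSR sSR sRD :=
    relayInputPower_pos hpS.le hpR.le hsLI.le hβSR₀ (hsSR k).le (hsRD k)
  have hlt : relayInputPower k pS pR sLI βSR sSR sRD <
      destInputPower k pS pR sLI βSR βRD sSR sRD M :=
    relayInputPower_lt_destInputPower hpS hpR (hβRD k).le (hsSR k) hsRD₀ (hsRD k) hM
  rw [gt_iff_lt, SINR_lowres_relay, SINR_lowres_dest hpS.ne']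
  exact div_lt_div_of_pos_left hsignal
    (add_pos_of_nonneg_of_pos hnoise (mul_pos ht hrelay)) (by gcongr)
end

section
/- In the shared context with θ = 1 (perfect ADCs at the destination), there exists a constant a > 0 independent of M, namely a = p_S·σ_SR(k)²·σ_RD(k)² / (B + C + D + E + F + G), such that SINR(M) = a·M for every M > 0; consequently R(M) = ((τ_c − 2τ_p)/τ_c)·log₂(1 + a·M) tends to +∞ as M → ∞. -/
open Finset Real

section InterferencePlusNoise

variable {ι : Type*} [Fintype ι] [DecidableEq ι]

/-- The interference-plus-noise power `B + C + D + E + F + G` of user `k` under perfect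
destination ADCs, i.e. the denominator of `SINR` without the destination quantization term `H`,
over an arbitrary finite index type of user pairs. As in `SINR`, `sSR` and `sRD` are variances. -/
noncomputable def interferencePlusNoise (k : ι) (pS pR sLI : ℝ) (βSR βRD sSR sRD : ι → ℝ)
    (α : ℝ) : ℝ :=
  pS * (βSR k * sRD k + βRD k * sSR k)
    + pS * ∑ j ∈ univ.erase k,
        (sRD k * βSR j + βRD k * (sSR j) ^ 2 * sRD j / (sSR k * sRD k))
    + pR * sLI * sRD k
    + sRD k
    + ((1 - α) / α) * sRD k * (pS * (sSR k + ∑ i, βSR i) + pR * sLI + 1)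
    + (pS / (pR * sSR k * sRD k)) * ∑ i, (sSR i) ^ 2 * sRD i

theorem interferencePlusNoise_pos {k : ι} {pS pR sLI : ℝ} {βSR βRD sSR sRD : ι → ℝ} {α : ℝ}
    (hpS : 0 ≤ pS) (hpR : 0 < pR) (hsLI : 0 ≤ sLI)
    (hβSR : ∀ i, 0 ≤ βSR i) (hβRD : 0 ≤ βRD k)
    (hsSR : 0 < sSR k) (hsRD : ∀ i, 0 ≤ sRD i) (hsRDk : 0 < sRD k)
    (hα0 : 0 < α) (hα1 : α ≤ 1) :
    0 < interferencePlusNoise k pS pR sLI βSR βRD sSR sRD α := by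
  have hβSRk : 0 ≤ βSR k := hβSR k
  have hInterUser : 0 ≤ ∑ j ∈ univ.erase k,
      (sRD k * βSR j + βRD k * (sSR j) ^ 2 * sRD j / (sSR k * sRD k)) :=
    sum_nonneg fun j _ => by
      have hβSRj : 0 ≤ βSR j := hβSR j
      have hsRDj : 0 ≤ sRD j := hsRD j
      positivity
  have hFading : 0 ≤ ∑ i, βSR i := sum_nonneg fun i _ => hβSR i
  have hRelayGain : 0 ≤ ∑ i, (sSR i) ^ 2 * sRD i :=
    sum_nonneg fun i _ => mul_nonneg (sq_nonneg _) (hsRD i)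
  unfold interferencePlusNoise
  positivity

end InterferencePlusNoise

theorem SINR_perfect_dest_adc {K : ℕ} (k : Fin K) (pS pR sLI : ℝ)
    (βSR βRD sSR sRD : Fin K → ℝ) (α M : ℝ) :
    SINR K k pS pR sLI βSR βRD sSR sRD α 1 M =
      pS * sSR k * sRD k / interferencePlusNoise k pS pR sLI βSR βRD sSR sRD α * M := by
  -- Every summand of `H` carries the factor `1 - θ`.
  simp only [SINR, interferencePlusNoise, sub_self, zero_div, zero_mul, mul_zero, add_zero]
  ring

theorem tendsto_logb_add_mul_atTop {b a : ℝ} (hb : 1 < b) (ha : 0 < a) (c : ℝ) :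
    Filter.Tendsto (fun x : ℝ => logb b (c + a * x)) Filter.atTop Filter.atTop :=
  (tendsto_logb_atTop hb).comp
    (Filter.tendsto_atTop_add_const_left _ c (Filter.tendsto_id.const_mul_atTop ha))

/-- With perfect ADCs at the destination (`θ = 1`) the approximated SINR is
linear in `M`: `SINR(M) = a·M` with
`a = p_S·σ_SR(k)²·σ_RD(k)² / (B + C + D + E + F + G) > 0` independent of `M`,
and consequently the approximated rate `((τc−2τp)/τc)·log₂(1 + a·M)` tends to
`+∞` as `M → ∞`. -/
theorem sinr_linear_in_M_of_perfect_dest_adc (K : ℕ) (hK : 1 ≤ K) (k : Fin K)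
    (pS pR sLI : ℝ) (βSR βRD sSR sRD : Fin K → ℝ) (α τc τp : ℝ)
    (hpS : 0 < pS) (hpR : 0 < pR) (hsLI : 0 < sLI)
    (hβSR : ∀ i, 0 < βSR i) (hβRD : ∀ i, 0 < βRD i)
    (hsSR : ∀ i, 0 < sSR i) (hsRD : ∀ i, 0 < sRD i)
    (hα0 : 0 < α) (hα1 : α ≤ 1) (hτp : 0 < τp) (hτc : 2 * τp < τc) :
    ∃ a : ℝ,
      a = pS * sSR k * sRD k /
        (pS * (βSR k * sRD k + βRD k * sSR k)
          + pS * ∑ j ∈ Finset.univ.erase k,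
              (sRD k * βSR j + βRD k * (sSR j) ^ 2 * sRD j / (sSR k * sRD k))
          + pR * sLI * sRD k
          + sRD k
          + ((1 - α) / α) * sRD k *
              (pS * (sSR k + ∑ i, βSR i) + pR * sLI + 1)
          + (pS / (pR * sSR k * sRD k)) * ∑ i, (sSR i) ^ 2 * sRD i) ∧
      0 < a ∧
      (∀ M : ℝ, 0 < M →
        SINR K k pS pR sLI βSR βRD sSR sRD α 1 M = a * M) ∧
      Filter.Tendsto
        (fun M : ℝ => (τc - 2 * τp) / τc * Real.logb 2 (1 + a * M))
        Filter.atTop Filter.atTop := by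
  have hN : 0 < interferencePlusNoise k pS pR sLI βSR βRD sSR sRD α :=
    interferencePlusNoise_pos hpS.le hpR hsLI.le (fun i => (hβSR i).le) (hβRD k).le
      (hsSR k) (fun i => (hsRD i).le) (hsRD k) hα0 hα1
  have hslope : 0 < pS * sSR k * sRD k /
      interferencePlusNoise k pS pR sLI βSR βRD sSR sRD α :=
    div_pos (mul_pos (mul_pos hpS (hsSR k)) (hsRD k)) hN
  have hprelog : 0 < (τc - 2 * τp) / τc := div_pos (by linarith) (by linarith)
  exact ⟨_, rfl, hslope,
    fun M _ => SINR_perfect_dest_adc k pS pR sLI βSR βRD sSR sRD α M,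
    (tendsto_logb_add_mul_atTop one_lt_two hslope 1).const_mul_atTop hprelog⟩
end

section
/- In the shared context, hold all parameters except p_S fixed (including M, the estimate variances and the fading coefficients). Then the map p_S ↦ SINR is strictly increasing on (0,∞). -/
open Finset Real

/-!
Every term of the denominator is affine in `p_S`: in the only suspicious one,
`p_S * ((p_R σ_LI² + 1) / (α p_S))`, the power cancels. Thus the SINR is a linear fractional
function `a p_S / (L p_S + N)`. The constant terms combine to
`N = σ_RD(k)² (p_R σ_LI² + 1) / (α θ) > 0`, so the determinant `a N` is positive and the
function is strictly increasing.
-/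

theorem strictMonoOn_linear_fractional {𝕜 : Type*} [Field 𝕜] [LinearOrder 𝕜]
    [IsStrictOrderedRing 𝕜] {a b c d : 𝕜} {s : Set 𝕜} (hdet : b * c < a * d)
    (hpos : ∀ x ∈ s, 0 < c * x + d) :
    StrictMonoOn (fun x => (a * x + b) / (c * x + d)) s := by
  intro x hx y hy hxy
  rw [div_lt_div_iff₀ (hpos x hx) (hpos y hy)]
  have cross_sub : (a * y + b) * (c * x + d) - (a * x + b) * (c * y + d)
      = (a * d - b * c) * (y - x) := by ring
  exact sub_pos.1 (cross_sub ▸ mul_pos (sub_pos.2 hdet) (sub_pos.2 hxy))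

namespace SINR

/-- The coefficient of the source power in the denominator of the SINR: the paper's `B + C + G`
and the parts of `F` and `H` proportional to `p_S`, divided by `p_S`. The `(1 - α)`-terms of `F`
and `H` are merged, and so are `G` and its distorted copy in `H`. -/
noncomputable def interferenceSlope {K : ℕ} (k : Fin K) (pR : ℝ)
    (βSR βRD sSR sRD : Fin K → ℝ) (α θ M : ℝ) : ℝ :=
  βSR k * sRD k + βRD k * sSR k
    + ∑ j ∈ univ.erase k, (sRD k * βSR j + βRD k * sSR j ^ 2 * sRD j / (sSR k * sRD k))
    + (1 - α) / (α * θ) * (sRD k * (sSR k + ∑ i, βSR i))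
    + (∑ i, sSR i ^ 2 * sRD i) / (θ * (pR * sSR k * sRD k))
    + (1 - θ) / θ * (M * sSR k * sRD k + sSR k * βRD k * (∑ i, sRD i) / sRD k
      + sRD k * ∑ i, βSR i)

/-- The part of the denominator of the SINR independent of the source power: the loop interference
and noise `D + E` of the paper, which the constant parts of `F` and `H` amplify by `1 / (α θ)`. -/
noncomputable def noiseFloor {K : ℕ} (k : Fin K) (pR sLI : ℝ) (sRD : Fin K → ℝ) (α θ : ℝ) : ℝ :=
  sRD k * (pR * sLI + 1) / (α * θ)

variable {K : ℕ} {k : Fin K} {pS pR sLI : ℝ} {βSR βRD sSR sRD : Fin K → ℝ} {α θ M : ℝ}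

lemma interferenceSlope_nonneg (hpR : 0 ≤ pR) (hβSR : ∀ i, 0 ≤ βSR i) (hβRD : 0 ≤ βRD k)
    (hsSR : 0 ≤ sSR k) (hsRD : ∀ i, 0 ≤ sRD i) (hα0 : 0 ≤ α) (hα1 : α ≤ 1)
    (hθ0 : 0 ≤ θ) (hθ1 : θ ≤ 1) (hM : 0 ≤ M) :
    0 ≤ interferenceSlope k pR βSR βRD sSR sRD α θ M := by
  have hβSRk := hβSR k
  have hsRDk := hsRD k
  have hα : 0 ≤ 1 - α := sub_nonneg.2 hα1
  have hθ : 0 ≤ 1 - θ := sub_nonneg.2 hθ1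
  have interPair_nonneg : 0 ≤ ∑ j ∈ univ.erase k,
      (sRD k * βSR j + βRD k * sSR j ^ 2 * sRD j / (sSR k * sRD k)) :=
    sum_nonneg fun j _ => by
      have hβSRj := hβSR j
      have hsRDj := hsRD j
      positivity
  have sum_βSR_nonneg : 0 ≤ ∑ i, βSR i := sum_nonneg fun i _ => hβSR i
  have sum_sRD_nonneg : 0 ≤ ∑ i, sRD i := sum_nonneg fun i _ => hsRD i
  have sum_sq_mul_nonneg : 0 ≤ ∑ i, sSR i ^ 2 * sRD i :=
    sum_nonneg fun i _ => mul_nonneg (sq_nonneg _) (hsRD i)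
  unfold interferenceSlope
  positivity

lemma noiseFloor_pos (hpR : 0 ≤ pR) (hsLI : 0 ≤ sLI) (hsRD : 0 < sRD k) (hα : 0 < α)
    (hθ : 0 < θ) : 0 < noiseFloor k pR sLI sRD α θ := by
  unfold noiseFloor
  positivity

lemma eq_linear_fractional (hpS : pS ≠ 0) (hα : α ≠ 0) (hθ : θ ≠ 0) :
    SINR K k pS pR sLI βSR βRD sSR sRD α θ M =
      M * sSR k * sRD k * pS /
        (interferenceSlope k pR βSR βRD sSR sRD α θ M * pS + noiseFloor k pR sLI sRD α θ) := by
  have power_cancels : pS * ((pR * sLI + 1) / (α * pS)) = (pR * sLI + 1) / α := by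
    field_simp
  have noise_amplification : 1 + (1 - α) / α + (1 - θ) / θ / α = 1 / (α * θ) := by
    field_simp
    ring
  have source_distortion : (1 - α) / α + (1 - α) * (1 - θ) / (α * θ) = (1 - α) / (α * θ) := by
    field_simp
    ring
  have G_distortion : 1 + (1 - θ) / θ = 1 / θ := by
    field_simp
    ring
  unfold SINR interferenceSlope noiseFloor
  dsimp only
  congr 1
  · ring
  · linear_combination (1 - θ) / θ * sRD k * power_cancels
      + sRD k * (pR * sLI + 1) * noise_amplification
      + sRD k * pS * (sSR k + ∑ i, βSR i) * source_distortion
      + pS / (pR * sSR k * sRD k) * (∑ i, sSR i ^ 2 * sRD i) * G_distortion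

end SINR

/-- The approximated SINR is strictly increasing in the source transmit
power `p_S` on `(0, ∞)` (all other parameters held fixed). -/
theorem sinr_strictMonoOn_source_power (K : ℕ) (hK : 1 ≤ K) (k : Fin K)
    (pR sLI : ℝ) (βSR βRD sSR sRD : Fin K → ℝ) (α θ M : ℝ)
    (hpR : 0 < pR) (hsLI : 0 < sLI)
    (hβSR : ∀ i, 0 < βSR i) (hβRD : ∀ i, 0 < βRD i)
    (hsSR : ∀ i, 0 < sSR i) (hsRD : ∀ i, 0 < sRD i)
    (hα0 : 0 < α) (hα1 : α ≤ 1) (hθ0 : 0 < θ) (hθ1 : θ ≤ 1) (hM : 0 < M) :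
    StrictMonoOn (fun pS => SINR K k pS pR sLI βSR βRD sSR sRD α θ M)
      (Set.Ioi 0) := by
  have slope_nonneg : 0 ≤ SINR.interferenceSlope k pR βSR βRD sSR sRD α θ M :=
    SINR.interferenceSlope_nonneg hpR.le (fun i => (hβSR i).le) (hβRD k).le
      (hsSR k).le (fun i => (hsRD i).le) hα0.le hα1 hθ0.le hθ1 hM.le
  have floor_pos : 0 < SINR.noiseFloor k pR sLI sRD α θ :=
    SINR.noiseFloor_pos hpR.le hsLI.le (hsRD k) hα0 hθ0
  have gain_pos : 0 < M * sSR k * sRD k := mul_pos (mul_pos hM (hsSR k)) (hsRD k)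
  have det_pos : 0 * SINR.interferenceSlope k pR βSR βRD sSR sRD α θ M <
      M * sSR k * sRD k * SINR.noiseFloor k pR sLI sRD α θ := by
    simpa only [zero_mul] using mul_pos gain_pos floor_pos
  refine (strictMonoOn_linear_fractional det_pos fun pS (hpS : 0 < pS) =>
    add_pos_of_nonneg_of_pos (mul_nonneg slope_nonneg hpS.le) floor_pos).congr
      fun pS (hpS : 0 < pS) => ?_
  simp only [add_zero, SINR.eq_linear_fractional hpS.ne' hα0.ne' hθ0.ne']
end

section
/- In the shared context, hold all parameters except p_R fixed. Then SINR, viewed as a function of p_R on (0,∞), tends to 0 as p_R → 0⁺ and tends to 0 as p_R → +∞. -/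
/-!
Collecting powers of the relay power, the numerator of the SINR is constant and its denominator is
`c + a * pR + b / pR`. The loop interference, inflated by the ADC distortion terms in `F` and `H`,
adds up to `a = σ_LI² σ_RD(k)² / (α θ)`; the terms in `1 / pR` are `G` and its share of `H`, in
total `b = G * pR / θ`. With `a` and `b` nonzero the denominator diverges at both ends, and
`pR ↦ pR⁻¹` exchanges the two ends together with `a` and `b`.
-/

open Finset Real

open Filter Topology Bornology

section Laurent

variable {𝕜 : Type*} [NormedDivisionRing 𝕜]

lemma tendsto_div_add_mul_add_mul_inv_nhdsNE_zero (n c a : 𝕜) {b : 𝕜} (hb : b ≠ 0) :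
    Tendsto (fun x => n / (c + a * x + b * x⁻¹)) (𝓝[≠] 0) (𝓝 0) := by
  have cleared : Tendsto (fun x => n * x / (c * x + a * x * x + b)) (𝓝 0) (𝓝 0) := by
    have : ContinuousAt (fun x => n * x / (c * x + a * x * x + b)) 0 :=
      ContinuousAt.div₀ (by fun_prop) (by fun_prop) (by simpa using hb)
    simpa using this.tendsto
  refine (cleared.mono_left nhdsWithin_le_nhds).congr' ?_
  filter_upwards [self_mem_nhdsWithin] with x (hx : x ≠ 0)
  calc n * x / (c * x + a * x * x + b)
      = n * x / ((c + a * x + b * x⁻¹) * x) := by simp [add_mul, mul_assoc, hx]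
    _ = n / (c + a * x + b * x⁻¹) := mul_div_mul_right _ _ hx

lemma tendsto_div_add_mul_add_mul_inv_cobounded (n c b : 𝕜) {a : 𝕜} (ha : a ≠ 0) :
    Tendsto (fun x => n / (c + a * x + b * x⁻¹)) (cobounded 𝕜) (𝓝 0) := by
  refine ((tendsto_div_add_mul_add_mul_inv_nhdsNE_zero n c b ha).comp
    tendsto_inv₀_cobounded').congr fun x => ?_
  rw [Function.comp_apply, inv_inv, add_right_comm]

end Laurent

lemma exists_SINR_eq_div_add_mul_add_mul_inv {K : ℕ} (k : Fin K) {pS α θ : ℝ} (sLI : ℝ)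
    (βSR βRD sSR sRD : Fin K → ℝ) (M : ℝ) (hpS : pS ≠ 0) (hα : α ≠ 0) (hθ : θ ≠ 0) :
    ∃ c, ∀ pR, SINR K k pS pR sLI βSR βRD sSR sRD α θ M =
      pS * M * sSR k * sRD k / (c + sLI * sRD k / (α * θ) * pR +
        pS / (θ * sSR k * sRD k) * (∑ i, sSR i ^ 2 * sRD i) * pR⁻¹) := by
  let B := pS * (βSR k * sRD k + βRD k * sSR k)
  let C := pS * ∑ j ∈ Finset.univ.erase k,
    (sRD k * βSR j + βRD k * sSR j ^ 2 * sRD j / (sSR k * sRD k))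
  let E := sRD k
  -- `F₀` and `H₀` are `F` and `H` without their terms in `pR` and `pR⁻¹`.
  let F₀ := (1 - α) / α * sRD k * (pS * (sSR k + ∑ i, βSR i) + 1)
  let H₀ := (1 - θ) / θ * pS * (M * sSR k * sRD k + sSR k * βRD k * (∑ i, sRD i) / sRD k)
    + (1 - θ) / θ * sRD k * (pS * (∑ i, βSR i) + 1 / α)
    + (1 - α) * (1 - θ) / (α * θ) * sRD k * pS * (sSR k + ∑ i, βSR i)
  refine ⟨B + C + E + F₀ + H₀, fun pR => ?_⟩
  have distortion_α : (1 - α) / α = α⁻¹ - 1 := by rw [sub_div, div_self hα, one_div]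
  have distortion_θ : (1 - θ) / θ = θ⁻¹ - 1 := by rw [sub_div, div_self hθ, one_div]
  have cancel_pS : (pR * sLI + 1) / (α * pS) * pS = (pR * sLI + 1) / α := by
    rw [← div_div, div_mul_cancel₀ _ hpS]
  simp only [SINR, B, C, E, F₀, H₀, distortion_α, distortion_θ]
  congr 1
  linear_combination (θ⁻¹ - 1) * sRD k * cancel_pS

theorem sinr_tendsto_zero_in_relay_power_general (K : ℕ) (k : Fin K)
    (pS sLI : ℝ) (βSR βRD sSR sRD : Fin K → ℝ) (α θ M : ℝ)
    (hpS : pS ≠ 0) (hsLI : sLI ≠ 0) (hsSR : sSR k ≠ 0) (hsRD : sRD k ≠ 0)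
    (hsum : ∑ i, sSR i ^ 2 * sRD i ≠ 0) (hα : α ≠ 0) (hθ : θ ≠ 0) :
    Tendsto (fun pR => SINR K k pS pR sLI βSR βRD sSR sRD α θ M) (𝓝[≠] 0) (𝓝 0) ∧
    Tendsto (fun pR => SINR K k pS pR sLI βSR βRD sSR sRD α θ M) (cobounded ℝ) (𝓝 0) := by
  obtain ⟨c, hSINR⟩ :=
    exists_SINR_eq_div_add_mul_add_mul_inv k sLI βSR βRD sSR sRD M hpS hα hθ
  simp only [hSINR]
  exact ⟨tendsto_div_add_mul_add_mul_inv_nhdsNE_zero _ _ _ (by positivity),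
    tendsto_div_add_mul_add_mul_inv_cobounded _ _ _ (by positivity)⟩

/-- As a function of the relay power `p_R`, the approximated SINR vanishes
both as `p_R → 0⁺` and as `p_R → +∞`. -/
theorem sinr_tendsto_zero_in_relay_power (K : ℕ) (hK : 1 ≤ K) (k : Fin K)
    (pS sLI : ℝ) (βSR βRD sSR sRD : Fin K → ℝ) (α θ M : ℝ)
    (hpS : 0 < pS) (hsLI : 0 < sLI)
    (hβSR : ∀ i, 0 < βSR i) (hβRD : ∀ i, 0 < βRD i)
    (hsSR : ∀ i, 0 < sSR i) (hsRD : ∀ i, 0 < sRD i)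
    (hα0 : 0 < α) (hα1 : α ≤ 1) (hθ0 : 0 < θ) (hθ1 : θ ≤ 1) (hM : 0 < M) :
    Filter.Tendsto (fun pR => SINR K k pS pR sLI βSR βRD sSR sRD α θ M)
      (nhdsWithin 0 (Set.Ioi 0)) (nhds 0) ∧
    Filter.Tendsto (fun pR => SINR K k pS pR sLI βSR βRD sSR sRD α θ M)
      Filter.atTop (nhds 0) := by
  have hsum : 0 < ∑ i, sSR i ^ 2 * sRD i :=
    Finset.sum_pos (fun i _ => mul_pos (pow_pos (hsSR i) 2) (hsRD i)) ⟨k, Finset.mem_univ k⟩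
  exact (sinr_tendsto_zero_in_relay_power_general K k pS sLI βSR βRD sSR sRD α θ M hpS.ne' hsLI.ne'
    (hsSR k).ne' (hsRD k).ne' hsum.ne' hα0.ne' hθ0.ne').imp
      (·.mono_left (nhdsGT_le_nhdsNE 0)) (·.mono_left IsOrderBornology.atTop_le_cobounded)
end
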